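/- Let w be a weight on ℕ. Then the spectrum of A_w satisfies closure{2·μ_w(σ) − |w| : σ ⊆ ℕ} ⊆ spec(A_w) ⊆ [−|w|, |w|] (real sets regarded as subsets of ℂ). Moreover, if w is ideal, then spec(A_w) = [−|w|, |w|]. -/

import Mathlib

/-!
Each `Ξ_k` is a self-adjoint unitary, so `A_w` is self-adjoint of norm at most `|w|`, which
confines its spectrum to `[-|w|, |w|]`. Conversely, for signs `ε_k = ±1` and a finite set `F` of
indices, the vector `∑_{τ ⊆ F} (∏_{i ∈ τ} ε_i) Z_τ` satisfies `Ξ_k v = ε_k v` for all `k ∈ F`, so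
`∑_{k ∈ F} w_k ε_k` is an eigenvalue of the partial sum `∑_{k ∈ F} w_k Ξ_k`. Since the invertible
elements of a Banach algebra form an open set, letting `F` grow shows that `∑_k w_k ε_k` lies in
the spectrum of `A_w`; it equals `2 μ_w(σ) - |w|` when `ε` is `1` on `σ` and `-1` off `σ`.
-/

noncomputable section

/-- The Hilbert space `𝔥 = ℓ²(Γ)` with `Γ = Finset ℕ`. -/
abbrev H : Type := lp (fun _ : Finset ℕ => ℂ) 2

/-- The canonical orthonormal basis vector `Z_σ`. -/
noncomputable def Z (σ : Finset ℕ) : H := lp.single 2 σ (1 : ℂ)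

open Complex Filter

section ApproximateSpectrum

theorem isClosed_setOf_mem_spectrum (𝕜 R : Type*) [NormedField 𝕜] [NormedRing R]
    [NormedAlgebra 𝕜 R] [HasSummableGeomSeries R] :
    IsClosed {p : 𝕜 × R | p.1 ∈ spectrum 𝕜 p.2} :=
  nonunits.isClosed.preimage (f := fun p : 𝕜 × R => algebraMap 𝕜 R p.1 - p.2)
    (((continuous_algebraMap 𝕜 R).comp continuous_fst).sub continuous_snd)

variable {𝕜 E : Type*} [NontriviallyNormedField 𝕜] [NormedAddCommGroup E] [NormedSpace 𝕜 E]
  [CompleteSpace E]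

theorem mem_spectrum_of_apply_eq_smul {T : E →L[𝕜] E} {z : 𝕜} {v : E} (hv : v ≠ 0)
    (hTv : T v = z • v) : z ∈ spectrum 𝕜 T := by
  rw [ContinuousLinearMap.spectrum_eq]
  exact (Module.End.hasEigenvalue_of_hasEigenvector
    ⟨Module.End.mem_eigenspace_iff.2 hTv, hv⟩).mem_spectrum

theorem mem_spectrum_of_hasSum_of_joint_eigenvectors {ι : Type*} {T : ι → E →L[𝕜] E}
    {A : E →L[𝕜] E} {c : ι → 𝕜} {z : 𝕜} (hT : HasSum T A) (hc : HasSum c z)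
    (hv : ∀ F : Finset ι, ∃ v ≠ 0, ∀ i ∈ F, T i v = c i • v) : z ∈ spectrum 𝕜 A := by
  have partial_mem (F : Finset ι) : ∑ i ∈ F, c i ∈ spectrum 𝕜 (∑ i ∈ F, T i) := by
    obtain ⟨v, hv₀, hv⟩ := hv F
    refine mem_spectrum_of_apply_eq_smul hv₀ ?_
    rw [sum_apply, Finset.sum_smul]
    exact Finset.sum_congr rfl hv
  exact (isClosed_setOf_mem_spectrum 𝕜 (E →L[𝕜] E)).mem_of_tendsto
    (hc.prodMk_nhds hT) (Eventually.of_forall partial_mem)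

end ApproximateSpectrum

section SelfAdjoint

theorem norm_ofReal_smul_le {E : Type*} [SeminormedAddCommGroup E] [NormedSpace ℂ E] {r : ℝ}
    (hr : 0 ≤ r) {x : E} (hx : ‖x‖ ≤ 1) : ‖(r : ℂ) • x‖ ≤ r := by
  rw [norm_smul, norm_real, Real.norm_of_nonneg hr]
  exact mul_le_of_le_one_right hr hx

variable {𝔄 : Type*} [CStarAlgebra 𝔄]

theorem spectrum_subset_Icc_of_isSelfAdjoint {a : 𝔄} (ha : IsSelfAdjoint a) :
    spectrum ℂ a ⊆ ofReal '' Set.Icc (-‖a‖) ‖a‖ := by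
  rcases subsingleton_or_nontrivial 𝔄 with _ | _
  · simp only [spectrum.of_subsingleton, Set.empty_subset]
  intro z hz
  refine ⟨z.re, abs_le.1 ?_, (ha.mem_spectrum_eq_re hz).symm⟩
  exact (abs_re_le_norm z).trans (spectrum.norm_le_norm_of_mem hz)

theorem spectrum_tsum_smul_subset_Icc {ι : Type*} {w : ι → ℝ} (hw : ∀ i, 0 ≤ w i)
    (hw_sum : Summable w) {u : ι → 𝔄} (hu : ∀ i, IsSelfAdjoint (u i)) (hu_norm : ∀ i, ‖u i‖ ≤ 1) :
    spectrum ℂ (∑' i, (w i : ℂ) • u i) ⊆ ofReal '' Set.Icc (-(∑' i, w i)) (∑' i, w i) := by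
  have self_adjoint : IsSelfAdjoint (∑' i, (w i : ℂ) • u i) := by
    simp only [IsSelfAdjoint, tsum_star, star_smul, (hu _).star_eq, star_def, conj_ofReal]
  have norm_le : ‖∑' i, (w i : ℂ) • u i‖ ≤ ∑' i, w i :=
    tsum_of_norm_bounded hw_sum.hasSum fun i => norm_ofReal_smul_le (hw i) (hu_norm i)
  exact (spectrum_subset_Icc_of_isSelfAdjoint self_adjoint).trans
    (Set.image_mono (Set.Icc_subset_Icc (neg_le_neg norm_le) norm_le))

end SelfAdjoint

section PermutedHilbertBasis

variable {κ 𝕜 E : Type*} [RCLike 𝕜] [NormedAddCommGroup E] [InnerProductSpace 𝕜 E]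
  (b : HilbertBasis κ 𝕜 E)

theorem ext_hilbertBasis {F : Type*} [NormedAddCommGroup F] [NormedSpace 𝕜 F] {S T : E →L[𝕜] F}
    (h : ∀ k, S (b k) = T (b k)) : S = T :=
  ContinuousLinearMap.ext_on (Submodule.dense_iff_topologicalClosure_eq_top.2 b.dense_span)
    (Set.forall_mem_range.2 h)

variable [CompleteSpace E] {f : κ → κ} {U : E →L[𝕜] E}

theorem isSelfAdjoint_of_involutive_on_basis (hf : f.Involutive)
    (hU : ∀ k, U (b k) = b (f k)) : IsSelfAdjoint U := by
  classical
  refine ext_hilbertBasis b fun k => b.repr.injective (lp.ext (funext fun j => ?_))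
  simp only [b.repr_apply_apply, ContinuousLinearMap.star_eq_adjoint,
    ContinuousLinearMap.adjoint_inner_right, hU, orthonormal_iff_ite.1 b.orthonormal, hf.eq_iff]

theorem norm_le_one_of_involutive_on_basis (hf : f.Involutive)
    (hU : ∀ k, U (b k) = b (f k)) : ‖U‖ ≤ 1 := by
  have involution : U * U = 1 := ext_hilbertBasis b fun k => by simp [hU, hf k]
  have unitary_U : U ∈ unitary (E →L[𝕜] E) := by
    simp only [Unitary.mem_iff, (isSelfAdjoint_of_involutive_on_basis b hf hU).star_eq,
      involution, and_self]
  refine U.opNorm_le_bound zero_le_one fun x => ?_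
  rw [one_mul, U.norm_map_of_mem_unitary unitary_U]

end PermutedHilbertBasis

section WalshSum

variable {ι : Type*}

/-- The Walsh sum `∑_{τ ⊆ F} ε_τ b_τ`, where `ε_τ = ∏_{i ∈ τ} ε_i`. When `ε` takes the values `±1`
it is a joint eigenvector of the operators `b_σ ↦ b_{σ ∆ {i}}` for `i ∈ F`. -/
def walshSum {R M : Type*} [CommSemiring R] [AddCommMonoid M] [Module R M] (ε : ι → R)
    (b : Finset ι → M) (F : Finset ι) : M :=
  ∑ τ ∈ F.powerset, (∏ i ∈ τ, ε i) • b τ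

theorem prod_symmDiff_singleton {N : Type*} [CommMonoid N] [DecidableEq ι] {ε : ι → N} {i : ι}
    (hε : ε i * ε i = 1) (τ : Finset ι) :
    ∏ j ∈ symmDiff τ {i}, ε j = ε i * ∏ j ∈ τ, ε j := by
  by_cases hi : i ∈ τ
  · have h_erase : symmDiff τ {i} = τ.erase i := by grind [Finset.mem_symmDiff]
    rw [h_erase, ← Finset.mul_prod_erase τ ε hi, ← mul_assoc, hε, one_mul]
  · have h_insert : symmDiff τ {i} = insert i τ := by grind [Finset.mem_symmDiff]
    rw [h_insert, Finset.prod_insert hi]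

theorem map_walshSum {R M : Type*} [CommSemiring R] [AddCommMonoid M] [Module R M]
    [DecidableEq ι] {ε : ι → R} {b : Finset ι → M} {F : Finset ι} {i : ι} (hi : i ∈ F)
    (hε : ε i * ε i = 1) {U : M →ₗ[R] M} (hU : ∀ σ, U (b σ) = b (symmDiff σ {i})) :
    U (walshSum ε b F) = ε i • walshSum ε b F := by
  have toggle_mem : ∀ τ ∈ F.powerset, symmDiff τ {i} ∈ F.powerset := by
    grind [Finset.mem_symmDiff]
  simp only [walshSum, map_sum, map_smul, hU, Finset.smul_sum, smul_smul]
  refine Finset.sum_nbij' (symmDiff · {i}) (symmDiff · {i}) toggle_mem toggle_mem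
    (fun τ _ => symmDiff_symmDiff_cancel_right _ _)
    (fun τ _ => symmDiff_symmDiff_cancel_right _ _) fun τ _ => ?_
  rw [prod_symmDiff_singleton hε, ← mul_assoc, hε, one_mul]

theorem walshSum_ne_zero {R M : Type*} [CommRing R] [Nontrivial R] [AddCommGroup M] [Module R M]
    (ε : ι → R) {b : Finset ι → M} (hb : LinearIndependent R b) (F : Finset ι) :
    walshSum ε b F ≠ 0 := fun h =>
  one_ne_zero (linearIndependent_iff'.1 hb F.powerset (fun τ => ∏ i ∈ τ, ε i) h ∅
    (Finset.empty_mem_powerset F))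

end WalshSum

section SubsetSums

variable {ι : Type*} {w : ι → ℝ}

theorem hasSum_mul_sign (hw : Summable w) (s : Set ι) [DecidablePred (· ∈ s)] :
    HasSum (fun i => w i * if i ∈ s then 1 else -1) (2 * (∑' i : s, w i) - ∑' i, w i) := by
  have sign_eq (i : ι) : (w i * if i ∈ s then 1 else -1) = 2 * s.indicator w i - w i := by
    by_cases hi : i ∈ s
    · simp only [hi, if_true, Set.indicator_of_mem]
      ring
    · simp [hi]
  simp only [sign_eq, tsum_subtype s w]
  exact ((hw.indicator s).hasSum.mul_left 2).sub hw.hasSum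

theorem Icc_subset_closure_signed_sums
    (hw : Set.Icc 0 (∑' i, w i) ⊆ closure {x : ℝ | ∃ s : Set ι, x = ∑' i : s, w i}) :
    Set.Icc (-(∑' i, w i)) (∑' i, w i) ⊆
      closure {x : ℝ | ∃ s : Set ι, x = 2 * (∑' i : s, w i) - ∑' i, w i} := by
  set W := ∑' i, w i
  calc Set.Icc (-W) W = (fun x => 2 * x + -W) '' Set.Icc 0 W := by
        rw [Set.image_affine_Icc' two_pos]
        ring_nf
    _ ⊆ (fun x => 2 * x + -W) '' closure {x : ℝ | ∃ s : Set ι, x = ∑' i : s, w i} :=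
        Set.image_mono hw
    _ ⊆ closure ((fun x => 2 * x + -W) '' {x : ℝ | ∃ s : Set ι, x = ∑' i : s, w i}) :=
        image_closure_subset_closure_image (by fun_prop)
    _ ⊆ _ := by
        refine closure_mono ?_
        rintro _ ⟨_, ⟨s, rfl⟩, rfl⟩
        exact ⟨s, (sub_eq_add_neg _ _).symm⟩

end SubsetSums

section Adjacency

variable {ι E : Type*} [DecidableEq ι] [NormedAddCommGroup E] [CompleteSpace E]

theorem signed_sum_mem_spectrum [NormedSpace ℂ E] {b : Finset ι → E}
    (hb : LinearIndependent ℂ b) {w : ι → ℝ} (hw_sum : Summable w) {Xi : ι → E →L[ℂ] E}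
    (hXi : ∀ k σ, Xi k (b σ) = b (symmDiff σ {k})) {A : E →L[ℂ] E}
    (hA : HasSum (fun k => (w k : ℂ) • Xi k) A) (s : Set ι) :
    ((2 * (∑' k : s, w k) - ∑' k, w k : ℝ) : ℂ) ∈ spectrum ℂ A := by
  classical
  let ε : ι → ℝ := fun k => if k ∈ s then 1 else -1
  have ε_sq (k : ι) : (ε k : ℂ) * ε k = 1 := by
    by_cases hk : k ∈ s <;> simp [ε, hk]
  refine mem_spectrum_of_hasSum_of_joint_eigenvectors hA
    (hasSum_ofReal.2 (hasSum_mul_sign hw_sum s)) fun F =>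
      ⟨walshSum (fun k => (ε k : ℂ)) b F, walshSum_ne_zero _ hb F, fun k hk => ?_⟩
  have eigen := map_walshSum (ε := fun k => (ε k : ℂ)) hk (ε_sq k)
    (U := (Xi k : E →ₗ[ℂ] E)) (hXi k)
  rw [smul_apply, ofReal_mul, mul_smul]
  exact congrArg _ eigen

theorem spectrum_A_general [InnerProductSpace ℂ E] (b : HilbertBasis (Finset ι) ℂ E)
    (w : ι → ℝ) (hw_nonneg : ∀ k, 0 ≤ w k) (hw_sum : Summable w)
    (Xi : ι → E →L[ℂ] E)
    (hXi : ∀ k σ, Xi k (b σ) = b (symmDiff σ {k}))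
    (A : E →L[ℂ] E) (hA : A = ∑' k, (w k : ℂ) • Xi k) :
    (ofReal ''
        closure {x : ℝ | ∃ s : Set ι, x = 2 * (∑' k : s, w k) - ∑' k, w k}
      ⊆ spectrum ℂ A) ∧
    spectrum ℂ A ⊆ ofReal '' Set.Icc (-(∑' k, w k)) (∑' k, w k) ∧
    (closure {x : ℝ | ∃ s : Set ι, x = ∑' k : s, w k} = Set.Icc 0 (∑' k, w k) →
      spectrum ℂ A = ofReal '' Set.Icc (-(∑' k, w k)) (∑' k, w k)) := by
  have toggle_involutive (k : ι) : (fun σ : Finset ι => symmDiff σ {k}).Involutive :=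
    fun σ => symmDiff_symmDiff_cancel_right _ _
  have Xi_norm (k : ι) : ‖Xi k‖ ≤ 1 :=
    norm_le_one_of_involutive_on_basis b (toggle_involutive k) (hXi k)
  have A_sum : HasSum (fun k => (w k : ℂ) • Xi k) A :=
    hA ▸ (Summable.of_norm_bounded hw_sum fun k =>
      norm_ofReal_smul_le (hw_nonneg k) (Xi_norm k)).hasSum
  have lower : ofReal '' closure {x : ℝ | ∃ s : Set ι, x = 2 * (∑' k : s, w k) - ∑' k, w k}
      ⊆ spectrum ℂ A := by
    refine Set.image_subset_iff.2 (closure_minimal ?_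
      ((spectrum.isClosed A).preimage continuous_ofReal))
    rintro _ ⟨s, rfl⟩
    exact signed_sum_mem_spectrum b.orthonormal.linearIndependent hw_sum hXi A_sum s
  have upper : spectrum ℂ A ⊆ ofReal '' Set.Icc (-(∑' k, w k)) (∑' k, w k) :=
    hA ▸ spectrum_tsum_smul_subset_Icc hw_nonneg hw_sum
      (fun k => isSelfAdjoint_of_involutive_on_basis b (toggle_involutive k) (hXi k)) Xi_norm
  exact ⟨lower, upper, fun ideal =>
    upper.antisymm ((Set.image_mono (Icc_subset_closure_signed_sums ideal.ge)).trans lower)⟩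

end Adjacency

/-- The Hilbert basis `σ ↦ Z σ` of `H`. -/
def zBasis : HilbertBasis (Finset ℕ) ℂ H :=
  .ofRepr (.refl ℂ H)

theorem zBasis_apply (σ : Finset ℕ) : zBasis σ = Z σ :=
  (zBasis.repr_symm_single σ).symm

/-- Theorem 3.4: `closure {2 μ_w(σ) - |w| : σ ⊆ ℕ} ⊆ spec(A_w) ⊆ [-|w|, |w|]`,
and if the weight `w` is ideal then `spec(A_w) = [-|w|, |w|]`. -/
theorem spectrum_A
    (w : ℕ → ℝ) (hw_pos : ∀ k, 0 < w k) (hw_sum : Summable w)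
    (Xi : ℕ → H →L[ℂ] H)
    (hXi : ∀ k σ, Xi k (Z σ) = Z (symmDiff σ {k}))
    (A : H →L[ℂ] H) (hA : A = ∑' k, (w k : ℂ) • Xi k) :
    (Complex.ofReal ''
        closure {x : ℝ | ∃ s : Set ℕ, x = 2 * (∑' k : s, w k) - ∑' k, w k}
      ⊆ spectrum ℂ A) ∧
    spectrum ℂ A ⊆ Complex.ofReal '' Set.Icc (-(∑' k, w k)) (∑' k, w k) ∧
    (closure {x : ℝ | ∃ s : Set ℕ, x = ∑' k : s, w k} = Set.Icc 0 (∑' k, w k) →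
      spectrum ℂ A = Complex.ofReal '' Set.Icc (-(∑' k, w k)) (∑' k, w k)) :=
  spectrum_A_general zBasis w (fun k => (hw_pos k).le) hw_sum Xi
    (by simpa only [zBasis_apply] using hXi) A hA
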